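/- Let V be an automorphism of the Kähler structure of the Kähler base (i.e. L_V J = 0 and L_V g = 0, hence also L_V ω = 0). Then there is a locally defined function f on the Sasakian lift with df(ξ) = 0 (namely f = −2H∘π₂, where H is a local Hamiltonian of V: ω(V, ·) = dH), such that the vector field U_V = V^L + fξ is a local infinitesimal automorphism of the almost contact metric structure of the Sasakian lift: L_{U_V} φ = 0 and L_{U_V} g^L = 0. -/

import Mathlib

/-!
Abstract framework for (local) differential geometry, following the standard
algebraic formulation: smooth functions form a commutative `ℝ`-algebra `F`,
vector fields form an `F`-module `V` equipped with a Lie bracket and a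
directional derivative (derivation) action on functions.  Metrics, connections,
curvature, Ricci tensors (via orthonormal frames), Lie derivatives, exterior
derivatives, almost contact metric / Sasakian structures, Kähler structures,
`D_{α,β}`-homotheties, twisted `η`-Ricci solitons, and the Sasakian lift of a
Kähler base are all expressed in this language.
-/

/-- The calculus of vector fields on a manifold: a Lie bracket and a
directional-derivative action of vector fields on functions, with the usual
rules. -/
structure VectorCalculus (F : Type*) (V : Type*) [CommRing F] [Algebra ℝ F]
    [AddCommGroup V] [Module F V] where
  bracket : V → V → V
  deriv : V → F → F
  bracket_antisymm : ∀ X Y, bracket X Y = - bracket Y X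
  bracket_add_left : ∀ X Y Z, bracket (X + Y) Z = bracket X Z + bracket Y Z
  bracket_smul_left : ∀ (f : F) (X Y : V),
      bracket (f • X) Y = f • bracket X Y - deriv Y f • X
  jacobi : ∀ X Y Z,
      bracket X (bracket Y Z) + bracket Y (bracket Z X) + bracket Z (bracket X Y) = 0
  deriv_add : ∀ (X : V) (f g : F), deriv X (f + g) = deriv X f + deriv X g
  deriv_mul : ∀ (X : V) (f g : F), deriv X (f * g) = deriv X f * g + f * deriv X g
  deriv_add_left : ∀ (X Y : V) (f : F), deriv (X + Y) f = deriv X f + deriv Y f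
  deriv_smul_left : ∀ (f : F) (X : V) (h : F), deriv (f • X) h = f * deriv X h
  deriv_const : ∀ (X : V) (r : ℝ), deriv X (algebraMap ℝ F r) = 0
  deriv_bracket : ∀ (X Y : V) (f : F),
      deriv (bracket X Y) f = deriv X (deriv Y f) - deriv Y (deriv X f)

section Defs

variable {F : Type*} {V : Type*} [CommRing F] [Algebra ℝ F]
  [AddCommGroup V] [Module F V]

/-- A (pseudo-)Riemannian metric: a symmetric `F`-bilinear form on vector fields. -/
structure IsMetric (g : V → V → F) : Prop where
  symm : ∀ X Y, g X Y = g Y X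
  add_left : ∀ X Y Z, g (X + Y) Z = g X Z + g Y Z
  smul_left : ∀ (f : F) (X Y : V), g (f • X) Y = f * g X Y

/-- `nabla` is the Levi-Civita connection of the metric `g`: an affine,
torsion-free, metric-compatible connection. -/
structure IsLeviCivita (C : VectorCalculus F V) (g : V → V → F)
    (nabla : V → V → V) : Prop where
  add_left : ∀ X Y Z, nabla (X + Y) Z = nabla X Z + nabla Y Z
  smul_left : ∀ (f : F) (X Y : V), nabla (f • X) Y = f • nabla X Y
  add_right : ∀ X Y Z, nabla X (Y + Z) = nabla X Y + nabla X Z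
  leibniz : ∀ (X : V) (f : F) (Y : V),
      nabla X (f • Y) = C.deriv X f • Y + f • nabla X Y
  torsion_free : ∀ X Y, nabla X Y - nabla Y X = C.bracket X Y
  compat : ∀ X Y Z, C.deriv X (g Y Z) = g (nabla X Y) Z + g Y (nabla X Z)

/-- Riemann curvature operator `R_{X Y} Z = ∇_X ∇_Y Z - ∇_Y ∇_X Z - ∇_{[X,Y]} Z`. -/
def curv (C : VectorCalculus F V) (nabla : V → V → V) (X Y Z : V) : V :=
  nabla X (nabla Y Z) - nabla Y (nabla X Z) - nabla (C.bracket X Y) Z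

/-- An orthonormal spanning frame for the metric `g`. -/
def IsOrthFrame (g : V → V → F) {m : ℕ} (E : Fin m → V) : Prop :=
  (∀ i j, g (E i) (E j) = if i = j then (1 : F) else 0) ∧
  (∀ X : V, X = ∑ i, g X (E i) • E i)

/-- Ricci tensor, computed as the trace of the curvature in the orthonormal
frame `E`:  `Ric(Y,Z) = ∑ᵢ g(R_{Eᵢ Y} Z, Eᵢ)`. -/
def ricci (C : VectorCalculus F V) (nabla : V → V → V) {m : ℕ} (E : Fin m → V)
    (g : V → V → F) (Y Z : V) : F :=
  ∑ i, g (curv C nabla (E i) Y Z) (E i)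

/-- Scalar curvature: trace of the Ricci tensor in the frame `E`. -/
def scalarCurv (C : VectorCalculus F V) (nabla : V → V → V) {m : ℕ}
    (E : Fin m → V) (g : V → V → F) : F :=
  ∑ i, ricci C nabla E g (E i) (E i)

/-- Lie derivative of a metric (symmetric 2-tensor):
`(L_X g)(Y,Z) = X g(Y,Z) - g([X,Y],Z) - g(Y,[X,Z])`. -/
def lieDerivMetric (C : VectorCalculus F V) (X : V) (g : V → V → F) (Y Z : V) : F :=
  C.deriv X (g Y Z) - g (C.bracket X Y) Z - g Y (C.bracket X Z)

/-- Lie derivative of a 1-form: `(L_X η)(Y) = X η(Y) - η([X,Y])`. -/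
def lieDerivOneForm (C : VectorCalculus F V) (X : V) (eta : V → F) (Y : V) : F :=
  C.deriv X (eta Y) - eta (C.bracket X Y)

/-- Lie derivative of a (1,1)-tensor field: `(L_X φ)(Y) = [X, φY] - φ[X,Y]`. -/
def lieDerivEndo (C : VectorCalculus F V) (X : V) (phi : V → V) (Y : V) : V :=
  C.bracket X (phi Y) - phi (C.bracket X Y)

/-- Lie derivative of a 2-form. -/
def lieDerivTwoForm (C : VectorCalculus F V) (X : V) (Th : V → V → F) (Y Z : V) : F :=
  C.deriv X (Th Y Z) - Th (C.bracket X Y) Z - Th Y (C.bracket X Z)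

/-- Exterior derivative of a 1-form (Blair's convention, with the factor `1/2`):
`dη(X,Y) = (1/2)(X η(Y) - Y η(X) - η([X,Y]))`. -/
noncomputable def extDerivOneForm (C : VectorCalculus F V) (eta : V → F) (X Y : V) : F :=
  (1/2 : ℝ) • (C.deriv X (eta Y) - C.deriv Y (eta X) - eta (C.bracket X Y))

/-- A 1-form is closed iff `X a(Y) - Y a(X) - a([X,Y]) = 0` for all `X, Y`. -/
def IsClosedOneForm (C : VectorCalculus F V) (a : V → F) : Prop :=
  ∀ X Y, C.deriv X (a Y) - C.deriv Y (a X) - a (C.bracket X Y) = 0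

/-- A 2-form is closed iff its exterior derivative vanishes. -/
def IsClosedTwoForm (C : VectorCalculus F V) (Th : V → V → F) : Prop :=
  ∀ X Y Z,
    C.deriv X (Th Y Z) - C.deriv Y (Th X Z) + C.deriv Z (Th X Y)
      - Th (C.bracket X Y) Z + Th (C.bracket X Z) Y - Th (C.bracket Y Z) X = 0

/-- Nijenhuis torsion of a (1,1)-tensor field `S`:
`N_S(X,Y) = S²[X,Y] + [SX,SY] - S([SX,Y]) - S([X,SY])`. -/
def nijenhuis (C : VectorCalculus F V) (S : V → V) (X Y : V) : V :=
  S (S (C.bracket X Y)) + C.bracket (S X) (S Y)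
    - S (C.bracket (S X) Y) - S (C.bracket X (S Y))

/-- An almost contact metric structure `(φ, ξ, η, g)`. -/
structure IsAlmostContactMetric (phi : V → V) (xi : V) (eta : V → F)
    (g : V → V → F) : Prop where
  metric : IsMetric g
  phi_add : ∀ X Y, phi (X + Y) = phi X + phi Y
  phi_smul : ∀ (f : F) (X : V), phi (f • X) = f • phi X
  eta_add : ∀ X Y, eta (X + Y) = eta X + eta Y
  eta_smul : ∀ (f : F) (X : V), eta (f • X) = f * eta X
  phi_sq : ∀ X, phi (phi X) = -X + eta X • xi
  eta_xi : eta xi = 1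
  compat : ∀ X Y, g (phi X) (phi Y) = g X Y - eta X * eta Y

/-- A Sasakian structure: an almost contact metric structure whose Levi-Civita
connection `nabla` satisfies `(∇_X φ)Y = g(X,Y) ξ - η(Y) X`. -/
def IsSasakianWith (C : VectorCalculus F V) (phi : V → V) (xi : V) (eta : V → F)
    (g : V → V → F) (nabla : V → V → V) : Prop :=
  IsAlmostContactMetric phi xi eta g ∧ IsLeviCivita C g nabla ∧
    ∀ X Y, nabla X (phi Y) - phi (nabla X Y) = g X Y • xi - eta Y • X

/-- Symmetric tensor product of two 1-forms:
`(a ⊙ b)(Y,Z) = (1/2)(a(Y) b(Z) + a(Z) b(Y))`. -/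
noncomputable def symProd (a b : V → F) (Y Z : V) : F := (1/2 : ℝ) • (a Y * b Z + a Z * b Y)

/-- Twisted `η`-Ricci soliton with data `(X, λ, C₁, C₂)`:
`η(X) = 0` and `Ric + (1/2) L_X g = λ g + 2 C₁ (L_X η) ⊙ η + C₂ η ⊗ η`. -/
def IsTwistedEtaRicciSoliton (C : VectorCalculus F V) (g : V → V → F)
    (eta : V → F) (Ric : V → V → F) (X : V) (lam C1 C2 : ℝ) : Prop :=
  eta X = 0 ∧
  ∀ Y Z, Ric Y Z + (1/2 : ℝ) • lieDerivMetric C X g Y Z =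
    lam • g Y Z + (2 * C1) • symProd (lieDerivOneForm C X eta) eta Y Z
      + C2 • (eta Y * eta Z)

/-- A Kähler structure `(J, g)` with Levi-Civita connection `nabla`. -/
structure IsKaehler (C : VectorCalculus F V) (J : V → V) (g : V → V → F)
    (nabla : V → V → V) : Prop where
  metric : IsMetric g
  lc : IsLeviCivita C g nabla
  J_add : ∀ X Y, J (X + Y) = J X + J Y
  J_smul : ∀ (f : F) (X : V), J (f • X) = f • J X
  J_sq : ∀ X, J (J X) = -X
  hermitian : ∀ X Y, g (J X) (J Y) = g X Y
  parallel : ∀ X Y, nabla X (J Y) = J (nabla X Y)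

/-- The metric of the `D_{α,β}`-homothety: `g' = α g + (β² - α) η ⊗ η`. -/
def dHomMetric (g : V → V → F) (eta : V → F) (α β : ℝ) (X Y : V) : F :=
  α • g X Y + (β ^ 2 - α) • (eta X * eta Y)

/-- The 1-form of the `D_{α,β}`-homothety: `η' = β η`. -/
def dHomEta (eta : V → F) (β : ℝ) (X : V) : F := β • eta X

end Defs

section DefsR

variable {F : Type*} {V : Type*} [CommRing F] [Algebra ℝ F]
  [AddCommGroup V] [Module F V] [Module ℝ V] [IsScalarTower ℝ F V]

/-- The Reeb field of the `D_{α,β}`-homothety: `ξ' = (1/β) ξ`. -/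
noncomputable def dHomXi (xi : V) (β : ℝ) : V := β⁻¹ • xi

/-- A `c`-Sasakian structure (`c` a real constant): an almost contact metric
structure whose Levi-Civita connection satisfies
`(∇_X φ)Y = c (g(X,Y) ξ - η(Y) X)`. -/
def IsCSasakianWith (C : VectorCalculus F V) (phi : V → V) (xi : V)
    (eta : V → F) (g : V → V → F) (nabla : V → V → V) (c : ℝ) : Prop :=
  IsAlmostContactMetric phi xi eta g ∧ IsLeviCivita C g nabla ∧
    ∀ X Y, nabla X (phi Y) - phi (nabla X Y) = c • (g X Y • xi - eta Y • X)

end DefsR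

/-- The Sasakian lift of a Kähler base `(N, J, g)` to `M = ℝ × N`, presented
axiomatically:  `liftF` is the pullback of functions along `π₂`, `liftV` is the
lift of vector fields `X ↦ X^L = X - (τ(X)∘π₂) ξ`, `ξ = ∂_t`, `η = dt + π₂*τ`,
`φ X^L = (JX)^L`, `φ ξ = 0`, `g^L = η ⊗ η + π₂* g`.  The structure fields
record exactly the identities satisfied by this construction. -/
structure SasakianLiftData
    {Fb : Type*} {Vb : Type*} [CommRing Fb] [Algebra ℝ Fb]
    [AddCommGroup Vb] [Module Fb Vb]
    {Fm : Type*} {Vm : Type*} [CommRing Fm] [Algebra ℝ Fm]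
    [AddCommGroup Vm] [Module Fm Vm]
    (Cb : VectorCalculus Fb Vb) (Cm : VectorCalculus Fm Vm)
    (J : Vb → Vb) (gb : Vb → Vb → Fb) where
  liftF : Fb →ₐ[ℝ] Fm
  liftV : Vb → Vm
  xi : Vm
  eta : Vm → Fm
  phi : Vm → Vm
  gL : Vm → Vm → Fm
  liftV_add : ∀ X Y, liftV (X + Y) = liftV X + liftV Y
  liftV_smul : ∀ (f : Fb) (X : Vb), liftV (f • X) = liftF f • liftV X
  eta_add : ∀ W W', eta (W + W') = eta W + eta W'
  eta_smul : ∀ (f : Fm) (W : Vm), eta (f • W) = f * eta W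
  phi_add : ∀ W W', phi (W + W') = phi W + phi W'
  phi_smul : ∀ (f : Fm) (W : Vm), phi (f • W) = f • phi W
  gL_metric : IsMetric gL
  eta_xi : eta xi = 1
  eta_lift : ∀ X, eta (liftV X) = 0
  phi_lift : ∀ X, phi (liftV X) = liftV (J X)
  phi_xi : phi xi = 0
  gL_lift : ∀ X Y, gL (liftV X) (liftV Y) = liftF (gb X Y)
  gL_xi : ∀ W, gL xi W = eta W
  bracket_lift : ∀ X Y, Cm.bracket (liftV X) (liftV Y)
      = liftV (Cb.bracket X Y) - ((2 : Fm) * liftF (gb X (J Y))) • xi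
  bracket_xi_lift : ∀ X, Cm.bracket xi (liftV X) = 0
  deriv_lift : ∀ (X : Vb) (f : Fb),
      Cm.deriv (liftV X) (liftF f) = liftF (Cb.deriv X f)
  deriv_xi : ∀ f : Fb, Cm.deriv xi (liftF f) = 0
  spanning : ∀ W : Vm, ∃ (k : ℕ) (a : Fin k → Fm) (X : Fin k → Vb),
      W = eta W • xi + ∑ i, a i • liftV (X i)


theorem SasakianLiftData.induct
    {Fb Vb Fm Vm : Type*} [CommRing Fb] [Algebra ℝ Fb]
    [AddCommGroup Vb] [Module Fb Vb]
    [CommRing Fm] [Algebra ℝ Fm] [AddCommGroup Vm] [Module Fm Vm]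
    {Cb : VectorCalculus Fb Vb} {Cm : VectorCalculus Fm Vm}
    {J : Vb → Vb} {gb : Vb → Vb → Fb}
    (L : SasakianLiftData Cb Cm J gb) (P : Vm → Prop)
    (hadd : ∀ A B, P A → P B → P (A + B))
    (hsmul : ∀ (a : Fm) A, P A → P (a • A))
    (hxi : P L.xi) (hl : ∀ X, P (L.liftV X)) (W : Vm) : P W := by
  obtain ⟨k, a, X, h⟩ := L.spanning W
  rw [h]
  refine hadd _ _ (hsmul _ _ hxi) ?_
  refine Finset.sum_induction _ P hadd ?_ (fun i _ => hsmul _ _ (hl _))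
  simpa using hsmul 0 _ hxi

section
variable {F V : Type*} [CommRing F] [Algebra ℝ F] [AddCommGroup V] [Module F V]

theorem VectorCalculus.bracket_add_right (C : VectorCalculus F V) (X Y Z : V) :
    C.bracket X (Y + Z) = C.bracket X Y + C.bracket X Z := by
  rw [C.bracket_antisymm X (Y + Z), C.bracket_add_left, C.bracket_antisymm Y X,
    C.bracket_antisymm Z X]
  abel

theorem VectorCalculus.bracket_smul_right (C : VectorCalculus F V) (f : F) (X Y : V) :
    C.bracket X (f • Y) = f • C.bracket X Y + C.deriv X f • Y := by
  rw [C.bracket_antisymm X (f • Y), C.bracket_smul_left, C.bracket_antisymm Y X]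
  module

theorem VectorCalculus.bracket_self (C : VectorCalculus F V) (X : V) :
    C.bracket X X = 0 := by
  have h := C.bracket_antisymm X X
  have h2 : (2 : F) • C.bracket X X = 0 := by
    rw [two_smul]; exact eq_neg_iff_add_eq_zero.mp h
  have h3 : algebraMap ℝ F (1/2) * 2 = 1 := by
    rw [← map_ofNat (algebraMap ℝ F) 2, ← map_mul]; norm_num
  rw [← one_smul F (C.bracket X X), ← h3, mul_smul, h2, smul_zero]

theorem VectorCalculus.deriv_zero (C : VectorCalculus F V) (X : V) : C.deriv X 0 = 0 := by
  simpa using C.deriv_const X 0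

theorem VectorCalculus.deriv_one (C : VectorCalculus F V) (X : V) : C.deriv X 1 = 0 := by
  simpa using C.deriv_const X 1

theorem VectorCalculus.deriv_neg (C : VectorCalculus F V) (X : V) (f : F) :
    C.deriv X (-f) = - C.deriv X f := by
  have := C.deriv_add X f (-f)
  rw [add_neg_cancel, C.deriv_zero] at this
  linear_combination -this

theorem VectorCalculus.deriv_two_mul (C : VectorCalculus F V) (X : V) (f : F) :
    C.deriv X (2 * f) = 2 * C.deriv X f := by
  rw [two_mul, C.deriv_add, two_mul]

theorem IsMetric.add_right {g : V → V → F} (h : IsMetric g) (X Y Z : V) :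
    g X (Y + Z) = g X Y + g X Z := by
  rw [h.symm, h.add_left, h.symm Y, h.symm Z]

theorem IsMetric.smul_right {g : V → V → F} (h : IsMetric g) (f : F) (X Y : V) :
    g X (f • Y) = f * g X Y := by
  rw [h.symm, h.smul_left, h.symm Y]

theorem IsMetric.zero_left {g : V → V → F} (h : IsMetric g) (X : V) :
    g 0 X = 0 := by
  have := h.smul_left 0 0 X
  simpa using this

theorem IsMetric.zero_right {g : V → V → F} (h : IsMetric g) (X : V) :
    g X 0 = 0 := by
  rw [h.symm, h.zero_left]

end

/-- If `V` is an automorphism of the Kähler structure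
(`L_V J = 0`, `L_V g = 0`) with local Hamiltonian `H` (`ω(V,·) = dH`), then
there is a function `f` on the Sasakian lift with `ξ f = 0` — namely
`f = -2 H∘π₂` — such that `U_V = V^L + f ξ` is an infinitesimal automorphism of
the almost contact metric structure: `L_{U_V} φ = 0` and `L_{U_V} g^L = 0`. -/
theorem lift_of_kaehler_automorphism
    {Fb Vb Fm Vm : Type*} [CommRing Fb] [Algebra ℝ Fb]
    [AddCommGroup Vb] [Module Fb Vb]
    [CommRing Fm] [Algebra ℝ Fm] [AddCommGroup Vm] [Module Fm Vm]
    (Cb : VectorCalculus Fb Vb) (Cm : VectorCalculus Fm Vm)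
    (J : Vb → Vb) (gb : Vb → Vb → Fb) (nablab : Vb → Vb → Vb)
    (hK : IsKaehler Cb J gb nablab)
    (L : SasakianLiftData Cb Cm J gb)
    (Vf : Vb) (H : Fb)
    (hVJ : ∀ X : Vb, Cb.bracket Vf (J X) = J (Cb.bracket Vf X))
    (hVg : ∀ X Y : Vb, lieDerivMetric Cb Vf gb X Y = 0)
    (hH : ∀ Y : Vb, gb Vf (J Y) = Cb.deriv Y H) :
    ∃ f : Fm, Cm.deriv L.xi f = 0 ∧ f = -((2 : Fm) * L.liftF H) ∧
      (∀ W : Vm, lieDerivEndo Cm (L.liftV Vf + f • L.xi) L.phi W = 0) ∧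
      (∀ W W' : Vm, lieDerivMetric Cm (L.liftV Vf + f • L.xi) L.gL W W' = 0) := by
  have hxf : Cm.deriv L.xi (-((2 : Fm) * L.liftF H)) = 0 := by
    rw [Cm.deriv_neg, Cm.deriv_two_mul, L.deriv_xi]; simp
  refine ⟨-((2 : Fm) * L.liftF H), hxf, rfl, ?_⟩
  have hUxi : Cm.bracket (L.liftV Vf + (-((2 : Fm) * L.liftF H)) • L.xi) L.xi = 0 := by
    rw [Cm.bracket_add_left, Cm.bracket_smul_left, hxf, Cm.bracket_self,
      Cm.bracket_antisymm, L.bracket_xi_lift]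
    simp
  have hUl : ∀ X, Cm.bracket (L.liftV Vf + (-((2 : Fm) * L.liftF H)) • L.xi) (L.liftV X)
      = L.liftV (Cb.bracket Vf X) := by
    intro X
    rw [Cm.bracket_add_left, Cm.bracket_smul_left, L.bracket_xi_lift, L.bracket_lift,
      Cm.deriv_neg, Cm.deriv_two_mul, L.deriv_lift, hH]
    module
  have hUd : ∀ h, Cm.deriv (L.liftV Vf + (-((2 : Fm) * L.liftF H)) • L.xi) (L.liftF h)
      = L.liftF (Cb.deriv Vf h) := by
    intro h
    rw [Cm.deriv_add_left, Cm.deriv_smul_left, L.deriv_lift, L.deriv_xi]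
    simp
  generalize L.liftV Vf + (-((2 : Fm) * L.liftF H)) • L.xi = U at hUxi hUl hUd ⊢
  have hphi0 : L.phi 0 = 0 := by simpa using L.phi_smul 0 0
  have hb0 : Cm.bracket U 0 = 0 := by simpa [Cm.deriv_zero] using Cm.bracket_smul_right 0 U 0
  have hm := L.gL_metric
  refine ⟨?_, ?_⟩
  · refine L.induct _ ?_ ?_ ?_ ?_
    · intro A B hA hB
      simp only [lieDerivEndo] at *
      rw [L.phi_add, Cm.bracket_add_right, Cm.bracket_add_right, L.phi_add,
        sub_eq_zero.mp hA, sub_eq_zero.mp hB, sub_self]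
    · intro a A hA
      simp only [lieDerivEndo] at *
      rw [L.phi_smul, Cm.bracket_smul_right, Cm.bracket_smul_right, L.phi_add, L.phi_smul,
        L.phi_smul, sub_eq_zero.mp hA, sub_self]
    · simp only [lieDerivEndo]
      rw [L.phi_xi, hUxi, hphi0, hb0, sub_self]
    · intro X
      simp only [lieDerivEndo]
      rw [L.phi_lift, hUl, hUl, L.phi_lift, hVJ, sub_self]
  · have hsymm : ∀ A B, lieDerivMetric Cm U L.gL A B = lieDerivMetric Cm U L.gL B A := by
      intro A B
      simp only [lieDerivMetric]
      rw [hm.symm A B, hm.symm (Cm.bracket U A) B, hm.symm A]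
      ring
    have hadd : ∀ W A B, lieDerivMetric Cm U L.gL A W = 0 → lieDerivMetric Cm U L.gL B W = 0 →
        lieDerivMetric Cm U L.gL (A + B) W = 0 := by
      intro W A B hA hB
      simp only [lieDerivMetric] at *
      rw [hm.add_left, Cm.bracket_add_right, hm.add_left, hm.add_left, Cm.deriv_add]
      linear_combination hA + hB
    have hsmul : ∀ W (a : Fm) A, lieDerivMetric Cm U L.gL A W = 0 →
        lieDerivMetric Cm U L.gL (a • A) W = 0 := by
      intro W a A hA
      simp only [lieDerivMetric] at *
      rw [hm.smul_left, Cm.bracket_smul_right, hm.add_left, hm.smul_left, hm.smul_left,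
        hm.smul_left, Cm.deriv_mul]
      linear_combination a * hA
    have hxl : ∀ X, lieDerivMetric Cm U L.gL L.xi (L.liftV X) = 0 := by
      intro X
      simp only [lieDerivMetric]
      rw [L.gL_xi, L.eta_lift, hUxi, hUl, L.gL_xi, L.eta_lift, hm.zero_left, Cm.deriv_zero]
      simp
    intro W W'
    refine L.induct (fun W => lieDerivMetric Cm U L.gL W W' = 0) (hadd _) (hsmul _) ?_ ?_ W
    · rw [hsymm]
      refine L.induct (fun W => lieDerivMetric Cm U L.gL W L.xi = 0) (hadd _) (hsmul _) ?_ ?_ W'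
      · simp only [lieDerivMetric]
        rw [L.gL_xi, L.eta_xi, hUxi, hm.zero_left, hm.zero_right, Cm.deriv_one]
        simp
      · intro X
        rw [hsymm]; exact hxl X
    · intro X
      rw [hsymm]
      refine L.induct (fun W => lieDerivMetric Cm U L.gL W (L.liftV X) = 0)
        (hadd _) (hsmul _) (hxl X) ?_ W'
      intro Y
      have := congrArg L.liftF (hVg Y X)
      simp only [lieDerivMetric, map_sub, map_zero] at *
      rw [hUl, hUl, L.gL_lift, L.gL_lift, L.gL_lift, hUd]
      exact this
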